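/- Let n ∈ [1,3), 1 < p₃ < p₂ < ∞ with 1/p₂ = 1/p₃ - 1/3 and (3-n)/3 < 1/p₃ < (4-n)/3. If a ∈ 𝒮(ℝ³) with ∫_{ℝ³} a(x) dx = 0, and Πa(x) = -(1/4π)∫ (x-y)/|x-y|³ a(y) dy, then ‖(1+|x|)^n Πa‖_{L^{p₂}} ≤ C ‖(1+|x|)^n a‖_{L^{p₃}} with C depending only on n, p₃. -/

import Mathlib

open MeasureTheory Real
open scoped ENNReal SchwartzMap

noncomputable section

/-- The operator `Π a = ∇(Δ^{-1} a)`, given by the explicit kernel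
`(Πa)(x) = -(1/4π) ∫ (x-y)/|x-y|³ a(y) dy`. -/
def PiOp (a : EuclideanSpace ℝ (Fin 3) → ℝ) (x : EuclideanSpace ℝ (Fin 3)) :
    EuclideanSpace ℝ (Fin 3) :=
  (-(1 / (4 * π))) • ∫ y, (a y / ‖x - y‖ ^ 3) • (x - y)

abbrev E3 := EuclideanSpace ℝ (Fin 3)

/-- power weight -/
def pw (δ : ℝ) (x : E3) : ℝ≥0∞ := ENNReal.ofReal (‖x‖ ^ δ)

lemma pw_measurable (δ : ℝ) : Measurable (pw δ) := by
  unfold pw; fun_prop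

lemma pw_mul {x : E3} (hx : x ≠ 0) (δ ε : ℝ) : pw δ x * pw ε x = pw (δ + ε) x := by
  unfold pw
  rw [← ENNReal.ofReal_mul (by positivity), Real.rpow_add (norm_pos_iff.2 hx)]

lemma pw_rpow (x : E3) (δ : ℝ) {r : ℝ} (hr : 0 ≤ r) : pw δ x ^ r = pw (δ * r) x := by
  unfold pw
  rw [ENNReal.ofReal_rpow_of_nonneg (by positivity) hr, Real.rpow_mul (norm_nonneg _)]

lemma pw_zero (x : E3) : pw 0 x = 1 := by simp [pw]

lemma pw_ne_top (δ : ℝ) (x : E3) : pw δ x ≠ ⊤ := ENNReal.ofReal_ne_top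

lemma pw_int_gen (δ : ℝ) (S : Set ℝ) [DecidablePred (· ∈ S)] (hS : MeasurableSet S)
    (hi : IntegrableOn (fun y : ℝ => y ^ (δ + 2)) (Set.Ioi 0 ∩ S)) :
    ∫⁻ x : E3, (if ‖x‖ ∈ S then pw δ x else 0) =
      ENNReal.ofReal (3 * (volume.real (Metric.ball (0 : E3) 1)) *
        ∫ y in Set.Ioi 0 ∩ S, y ^ (δ + 2)) := by
  set f : ℝ → ℝ := S.indicator (fun y => y ^ δ) with hf
  have e1 : ∀ y ∈ Set.Ioi (0:ℝ), y ^ (Module.finrank ℝ E3 - 1) • f y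
      = S.indicator (fun y => y ^ (δ + 2)) y := by
    intro y hy
    have hy : 0 < y := hy
    by_cases hyS : y ∈ S
    · simp only [hf, Set.indicator_of_mem hyS, finrank_euclideanSpace, Fintype.card_fin]
      rw [Real.rpow_add hy]
      norm_num
      ring
    · simp [hf, hyS]
  have hint : IntegrableOn (fun y : ℝ ↦ y ^ (Module.finrank ℝ E3 - 1) • f y) (Set.Ioi 0) := by
    rw [integrableOn_congr_fun e1 measurableSet_Ioi]
    rw [IntegrableOn, integrable_indicator_iff hS, IntegrableOn, Measure.restrict_restrict hS,
      Set.inter_comm]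
    exact hi
  have hI := (integrable_fun_norm_addHaar (volume : Measure E3) (f := f)).2 hint
  have h2 := integral_fun_norm_addHaar (volume : Measure E3) f
  rw [setIntegral_congr_fun measurableSet_Ioi e1, setIntegral_indicator hS] at h2
  have h3 := ofReal_integral_eq_lintegral_ofReal hI (by
    refine Filter.Eventually.of_forall fun x => ?_
    simp only [hf]
    exact Set.indicator_apply_nonneg (fun _ => by positivity))
  rw [h2] at h3
  simp only [finrank_euclideanSpace, Fintype.card_fin] at h3
  rw [show 3 * (volume.real (Metric.ball (0 : E3) 1)) *
        ∫ y in Set.Ioi 0 ∩ S, y ^ (δ + 2) = 3 • (volume.real (Metric.ball (0 : E3) 1)) •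
        ∫ y in Set.Ioi 0 ∩ S, y ^ (δ + 2) by simp [mul_assoc], h3]
  congr 1; ext x
  by_cases hx : ‖x‖ ∈ S <;> simp [hf, hx, pw]

lemma pw_int_ball (δ : ℝ) (hδ : -3 < δ) : ∃ C : ℝ, 0 < C ∧ ∀ R : ℝ, 0 < R →
    ∫⁻ x : E3, (if ‖x‖ < R then pw δ x else 0) ≤ ENNReal.ofReal (C * R ^ (δ + 3)) := by
  have hv : 0 < volume.real (Metric.ball (0 : E3) 1) := by
    rw [measureReal_def]
    exact ENNReal.toReal_pos (Metric.measure_ball_pos _ _ one_pos).ne' measure_ball_lt_top.ne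
  refine ⟨3 * volume.real (Metric.ball (0 : E3) 1) / (δ + 3), by
    have : 0 < δ + 3 := by linarith
    positivity, fun R hR => ?_⟩
  have h := pw_int_gen δ (Set.Iio R) measurableSet_Iio (by
    rw [Set.Ioi_inter_Iio]
    exact (intervalIntegral.integrableOn_Ioo_rpow_iff hR).2 (by linarith))
  simp only [Set.mem_Iio] at h
  rw [h, Set.Ioi_inter_Iio, ← integral_Ioc_eq_integral_Ioo, ← intervalIntegral.integral_of_le hR.le,
    integral_rpow (Or.inl (by linarith)), Real.zero_rpow (by linarith)]
  apply le_of_eq; congr 1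
  rw [show δ + 2 + 1 = δ + 3 by ring]; ring

lemma pw_int_compl (δ : ℝ) (hδ : δ < -3) : ∃ C : ℝ, 0 < C ∧ ∀ R : ℝ, 0 < R →
    ∫⁻ x : E3, (if R ≤ ‖x‖ then pw δ x else 0) ≤ ENNReal.ofReal (C * R ^ (δ + 3)) := by
  have hv : 0 < volume.real (Metric.ball (0 : E3) 1) := by
    rw [measureReal_def]
    exact ENNReal.toReal_pos (Metric.measure_ball_pos _ _ one_pos).ne' measure_ball_lt_top.ne
  refine ⟨3 * volume.real (Metric.ball (0 : E3) 1) / (-(δ + 3)), by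
    have : 0 < -(δ + 3) := by linarith
    positivity, fun R hR => ?_⟩
  have hs : Set.Ioi 0 ∩ Set.Ici R = Set.Ici R := Set.inter_eq_right.2 fun x hx => lt_of_lt_of_le hR hx
  have h := pw_int_gen δ (Set.Ici R) measurableSet_Ici (by
    rw [hs, integrableOn_Ici_iff_integrableOn_Ioi]
    exact integrableOn_Ioi_rpow_of_lt (by linarith) hR)
  simp only [Set.mem_Ici] at h
  rw [h, hs, integral_Ici_eq_integral_Ioi, integral_Ioi_rpow_of_lt (by linarith) hR]
  apply le_of_eq; congr 1
  rw [show δ + 2 + 1 = δ + 3 by ring, div_neg]; ring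

lemma layer (m : ℝ) (hm : 0 < m) (u : ℝ≥0∞) :
    ∫⁻ l in Set.Ioi (0:ℝ), (if ENNReal.ofReal l < u then ENNReal.ofReal (l ^ (m - 1)) else 0)
      = ENNReal.ofReal (1 / m) * u ^ m := by
  have key : ∀ b : ℝ, 0 < b → ∫⁻ l in Set.Ioi (0:ℝ),
      (if ENNReal.ofReal l < ENNReal.ofReal b then ENNReal.ofReal (l ^ (m - 1)) else 0)
      = ENNReal.ofReal (1 / m) * (ENNReal.ofReal b) ^ m := by
    intro b hb
    have e : ∀ l : ℝ, (if ENNReal.ofReal l < ENNReal.ofReal b then ENNReal.ofReal (l ^ (m - 1)) else 0)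
        = (Set.Iio b).indicator (fun l => ENNReal.ofReal (l ^ (m - 1))) l := by
      intro l
      simp [Set.indicator_apply, ENNReal.ofReal_lt_ofReal_iff hb]
    simp_rw [e]
    rw [setLIntegral_indicator measurableSet_Iio, Set.Iio_inter_Ioi]
    rw [← ofReal_integral_eq_lintegral_ofReal
      ((intervalIntegral.integrableOn_Ioo_rpow_iff hb).2 (by linarith))
      ((ae_restrict_iff' measurableSet_Ioo).2 (Filter.Eventually.of_forall fun x hx =>
        Real.rpow_nonneg hx.1.le _))]
    rw [← integral_Ioc_eq_integral_Ioo, ← intervalIntegral.integral_of_le hb.le,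
      integral_rpow (Or.inl (by linarith)), Real.zero_rpow (by linarith),
      ENNReal.ofReal_rpow_of_pos hb, ← ENNReal.ofReal_mul (by positivity)]
    congr 1
    rw [show m - 1 + 1 = m by ring]; ring
  by_cases hu : u = ⊤
  · subst hu
    rw [ENNReal.top_rpow_of_pos hm, ENNReal.mul_top (by simpa using hm)]
    rw [eq_top_iff]
    refine ENNReal.le_of_forall_nnreal_lt fun r _ => ?_
    set b : ℝ := (m * (r + 1)) ^ (1 / m) with hb
    have hb0 : 0 < b := by positivity
    calc (r : ℝ≥0∞) ≤ ENNReal.ofReal (1 / m) * (ENNReal.ofReal b) ^ m := by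
          rw [ENNReal.ofReal_rpow_of_pos hb0, ← ENNReal.ofReal_mul (by positivity), hb,
            ← Real.rpow_mul (by positivity), one_div_mul_cancel hm.ne', Real.rpow_one]
          rw [← ENNReal.ofReal_coe_nnreal]
          apply ENNReal.ofReal_le_ofReal
          field_simp
          linarith
      _ = _ := (key b hb0).symm
      _ ≤ _ := by
          refine lintegral_mono fun l => ?_
          simp only [ENNReal.ofReal_lt_top, if_true]
          split_ifs <;> simp
  · by_cases h0 : u = 0
    · subst h0; simp [ENNReal.zero_rpow_of_pos hm]
    · have := key u.toReal (ENNReal.toReal_pos h0 hu)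
      rwa [ENNReal.ofReal_toReal hu] at this

lemma ae_ne_zero3 : ∀ᵐ x : E3, x ≠ 0 := by
  have : (volume : Measure E3) {0} = 0 := measure_singleton 0
  exact compl_mem_ae_iff.2 this

lemma hardy (p q p' β s : ℝ) (hpp : p.HolderConjugate p') (hpq : p < q)
    (hrel : 1 / q = 1 / p - 1 / 3)
    (R : E3 → E3 → Prop) [∀ x y, Decidable (R x y)] (hR : MeasurableSet {z : E3 × E3 | R z.1 z.2})
    (C1 C2 C3 : ℝ≥0∞) (hC1 : C1 ≠ ⊤) (hC2 : C2 ≠ ⊤) (hC3 : C3 ≠ ⊤)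
    (h1 : ∀ x, x ≠ 0 → ∫⁻ y : E3, (if R x y then pw ((β - s) * p') y else 0)
      ≤ C1 * pw ((β - s) * p' + 3) x)
    (h2 : ∀ x y, x ≠ 0 → y ≠ 0 → R x y → pw (s * p) y ≤ C2 * pw (s * p) x)
    (h3 : ∀ y, y ≠ 0 → ∫⁻ x : E3, (if R x y then pw (-3 - s * p) x else 0)
      ≤ C3 * pw (-(s * p)) y) :
    ∃ C : ℝ≥0∞, C ≠ ⊤ ∧ ∀ f : E3 → ℝ≥0∞, Measurable f → ∫⁻ y, f y ^ p ≤ 1 →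
      ∫⁻ x, (pw (-2 - β) x * ∫⁻ y, (if R x y then pw β y * f y else 0)) ^ q ≤ C := by
  have hp0 : 0 < p := hpp.pos
  have hp'0 : 0 < p' := hpp.symm.pos
  have hq0 : 0 < q := hp0.trans hpq
  have hqp : 0 ≤ q / p - 1 := by
    rw [sub_nonneg, one_le_div hp0]; exact hpq.le
  have hconj : 1 / p' = 1 - 1 / p := by
    have := hpp.inv_add_inv_eq_one; simp only [one_div]; linarith
  refine ⟨C1 ^ (q / p') * C2 ^ (q / p - 1) * C3, ?_, ?_⟩
  · refine ENNReal.mul_ne_top (ENNReal.mul_ne_top ?_ ?_) hC3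
    · exact ENNReal.rpow_ne_top_of_nonneg (by positivity) hC1
    · exact ENNReal.rpow_ne_top_of_nonneg hqp hC2
  intro f hf hf1
  have mR : ∀ x, MeasurableSet {y | R x y} := fun x => measurable_prodMk_left hR
  have mite : ∀ (x : E3) (g : E3 → ℝ≥0∞), Measurable g →
      Measurable (fun y => if R x y then g y else 0) := fun x g hg =>
    Measurable.ite (mR x) hg measurable_const
  set G : E3 → ℝ≥0∞ := fun x => ∫⁻ y, (if R x y then pw (s * p) y * f y ^ p else 0) with hG
  have hpt : ∀ x, x ≠ 0 → (pw (-2 - β) x * ∫⁻ y, (if R x y then pw β y * f y else 0)) ^ q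
      ≤ C1 ^ (q / p') * C2 ^ (q / p - 1) * (pw (-3 - s * p) x * G x) := by
    intro x hx
    have hH : ∫⁻ y, (if R x y then pw β y * f y else 0) ≤
        (C1 * pw ((β - s) * p' + 3) x) ^ (1 / p') * (G x) ^ (1 / p) := by
      calc ∫⁻ y, (if R x y then pw β y * f y else 0)
          = ∫⁻ y, ((fun y => if R x y then pw (β - s) y else 0) *
              (fun y => if R x y then pw s y * f y else 0)) y := by
            refine lintegral_congr_ae ?_
            filter_upwards [ae_ne_zero3] with y hy
            simp only [Pi.mul_apply]
            split_ifs
            · rw [← mul_assoc, pw_mul hy]; simp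
            · simp
        _ ≤ _ := ENNReal.lintegral_mul_le_Lp_mul_Lq volume hpp.symm
            (mite x _ (pw_measurable _)).aemeasurable
            (mite x _ ((pw_measurable _).mul hf)).aemeasurable
        _ ≤ _ := by
            gcongr
            · refine le_trans (lintegral_mono fun y => ?_) (h1 x hx)
              split_ifs
              · rw [pw_rpow _ _ hp'0.le]
              · simp [ENNReal.zero_rpow_of_pos hp'0]
            · refine lintegral_mono fun y => ?_
              simp only
              split_ifs
              · rw [ENNReal.mul_rpow_of_nonneg _ _ hp0.le, pw_rpow _ _ hp0.le]
              · simp [ENNReal.zero_rpow_of_pos hp0]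
    have hGle : G x ≤ C2 * pw (s * p) x := by
      calc G x ≤ ∫⁻ y, C2 * pw (s * p) x * f y ^ p := by
            refine lintegral_mono_ae ?_
            filter_upwards [ae_ne_zero3] with y hy
            split_ifs with h
            · gcongr; exact h2 x y hx hy h
            · simp
        _ = C2 * pw (s * p) x * ∫⁻ y, f y ^ p := lintegral_const_mul _ (hf.pow_const _)
        _ ≤ C2 * pw (s * p) x * 1 := by gcongr
        _ = _ := mul_one _
    have hGq : (G x) ^ (q / p) ≤ C2 ^ (q / p - 1) * pw (s * p * (q / p - 1)) x * G x := by
      calc (G x) ^ (q / p) = (G x) ^ (q / p - 1) * G x := by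
            conv_lhs => rw [show q / p = (q / p - 1) + 1 by ring]
            rw [ENNReal.rpow_add_of_nonneg _ _ hqp zero_le_one, ENNReal.rpow_one]
        _ ≤ (C2 * pw (s * p) x) ^ (q / p - 1) * G x := by gcongr
        _ = _ := by rw [ENNReal.mul_rpow_of_nonneg _ _ hqp, pw_rpow _ _ hqp]
    calc _ ≤ (pw (-2 - β) x * ((C1 * pw ((β - s) * p' + 3) x) ^ (1 / p') * (G x) ^ (1 / p))) ^ q := by
          gcongr
      _ = pw ((-2 - β) * q) x * (C1 ^ (q / p') * pw (((β - s) * p' + 3) * (q / p')) x *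
            (G x) ^ (q / p)) := by
          rw [ENNReal.mul_rpow_of_nonneg _ _ hq0.le, ENNReal.mul_rpow_of_nonneg _ _ hq0.le,
            ← ENNReal.rpow_mul, ← ENNReal.rpow_mul, pw_rpow _ _ hq0.le,
            one_div_mul_eq_div, one_div_mul_eq_div, ENNReal.mul_rpow_of_nonneg _ _ (by positivity),
            pw_rpow _ _ (by positivity)]
      _ ≤ pw ((-2 - β) * q) x * (C1 ^ (q / p') * pw (((β - s) * p' + 3) * (q / p')) x *
            (C2 ^ (q / p - 1) * pw (s * p * (q / p - 1)) x * G x)) := by gcongr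
      _ = C1 ^ (q / p') * C2 ^ (q / p - 1) * ((pw ((-2 - β) * q) x * pw (((β - s) * p' + 3) * (q / p')) x
            * pw (s * p * (q / p - 1)) x) * G x) := by ring
      _ = _ := by
          rw [pw_mul hx, pw_mul hx]
          congr 3
          have e1 : ((β - s) * p' + 3) * (q / p') = (β - s) * q + 3 * q * (1 / p') := by
            field_simp
          have e2 : s * p * (q / p - 1) = s * q - s * p := by field_simp
          have e3 : 3 * q * (1 / p) = 3 + q := by
            have : 1 / p = 1 / q + 1 / 3 := by linarith
            rw [this]; field_simp
          rw [e1, e2, hconj]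
          linarith
  have m2 : Measurable (fun z : E3 × E3 => if R z.1 z.2 then pw (s * p) z.2 * f z.2 ^ p else 0) :=
    Measurable.ite hR (((pw_measurable _).comp measurable_snd).mul
      ((hf.comp measurable_snd).pow_const _)) measurable_const
  have mG : Measurable G := m2.lintegral_prod_right'
  calc _ ≤ ∫⁻ x, C1 ^ (q / p') * C2 ^ (q / p - 1) * (pw (-3 - s * p) x * G x) := by
        refine lintegral_mono_ae ?_
        filter_upwards [ae_ne_zero3] with x hx using hpt x hx
    _ = C1 ^ (q / p') * C2 ^ (q / p - 1) * ∫⁻ x, (pw (-3 - s * p) x * G x) :=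
        lintegral_const_mul _ ((pw_measurable _).mul mG)
    _ ≤ C1 ^ (q / p') * C2 ^ (q / p - 1) * C3 := by
        gcongr
        calc ∫⁻ x, (pw (-3 - s * p) x * G x)
            = ∫⁻ x, ∫⁻ y, pw (-3 - s * p) x * (if R x y then pw (s * p) y * f y ^ p else 0) := by
              refine lintegral_congr fun x => ?_
              rw [lintegral_const_mul]
              exact mite x _ ((pw_measurable _).mul (hf.pow_const _))
          _ = ∫⁻ y, ∫⁻ x, pw (-3 - s * p) x * (if R x y then pw (s * p) y * f y ^ p else 0) := by
              apply lintegral_lintegral_swap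
              exact (((pw_measurable _).comp measurable_fst).mul m2).aemeasurable
          _ = ∫⁻ y, (pw (s * p) y * f y ^ p) * ∫⁻ x, (if R x y then pw (-3 - s * p) x else 0) := by
              refine lintegral_congr fun y => ?_
              rw [← lintegral_const_mul]
              · refine lintegral_congr fun x => ?_
                split_ifs
                · ring
                · simp
              · exact Measurable.ite (measurable_prodMk_right hR) (pw_measurable _) measurable_const
          _ ≤ ∫⁻ y, C3 * f y ^ p := by
              refine lintegral_mono_ae ?_
              filter_upwards [ae_ne_zero3] with y hy
              calc _ ≤ (pw (s * p) y * f y ^ p) * (C3 * pw (-(s * p)) y) := by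
                    gcongr; exact h3 y hy
                _ = C3 * f y ^ p * (pw (s * p) y * pw (-(s * p)) y) := by ring
                _ = _ := by rw [pw_mul hy]; simp [pw_zero]
          _ = C3 * ∫⁻ y, f y ^ p := lintegral_const_mul _ (hf.pow_const _)
          _ ≤ C3 * 1 := by gcongr
          _ = C3 := mul_one _

set_option maxHeartbeats 1000000 in
lemma hls (p q p' : ℝ) (hpp : p.HolderConjugate p') (hpq : p < q)
    (hrel : 1 / q = 1 / p - 1 / 3) :
    ∃ C : ℝ≥0∞, C ≠ ⊤ ∧ ∀ f : E3 → ℝ≥0∞, Measurable f → ∫⁻ y, f y ^ p ≤ 1 →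
      ∫⁻ x, (∫⁻ y, pw (-2) (x - y) * f y) ^ q ≤ C := by
  have hp0 : 0 < p := hpp.pos
  have hp1 : 1 < p := hpp.lt
  have hp'0 : 0 < p' := hpp.symm.pos
  have hq0 : 0 < q := hp0.trans hpq
  have hconj : 1 / p' = 1 - 1 / p := by
    have := hpp.inv_add_inv_eq_one; simp only [one_div]; linarith
  have hq1 : 0 < 1 / q := by positivity
  have hpinv : 1 / p < 1 := by rw [div_lt_one hp0]; exact hp1
  have h2p' : -2 * p' < -3 := by
    have h : 1 / p' < 2 / 3 := by linarith
    rw [div_lt_div_iff₀ hp'0 (by norm_num)] at h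
    linarith
  obtain ⟨C1, hC1, hA⟩ := pw_int_ball (-2) (by norm_num)
  obtain ⟨C2, hC2, hB⟩ := pw_int_compl (-2 * p') h2p'
  set B2 : ℝ := C2 ^ (1 / p') with hB2
  have hB2p : 0 < B2 := by positivity
  set K : ℝ := C1 + B2 + 1 with hK
  have hKp : 0 < K := by positivity
  set m : ℝ := q - 1 - q / 3 with hm
  have hmq : m = q * (1 - 1 / p) := by
    have : 1 / p = 1 / q + 1 / 3 := by linarith
    rw [this, hm]; field_simp; ring
  have hm0 : 0 < m := by rw [hmq]; exact mul_pos hq0 (by linarith)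
  refine ⟨ENNReal.ofReal K ^ q * (ENNReal.ofReal q * (ENNReal.ofReal C1 * ENNReal.ofReal (1 / m))),
    ?_, ?_⟩
  · refine ENNReal.mul_ne_top (ENNReal.rpow_ne_top_of_nonneg hq0.le ENNReal.ofReal_ne_top) ?_
    exact ENNReal.mul_ne_top ENNReal.ofReal_ne_top
      (ENNReal.mul_ne_top ENNReal.ofReal_ne_top ENNReal.ofReal_ne_top)
  intro f hf hf1
  set F : E3 → ℝ≥0∞ := fun x => ∫⁻ y, pw (-2) (x - y) * f y with hF
  have mker : ∀ r : ℝ, Measurable (fun z : E3 => if ‖z‖ < r then pw (-2) z else 0) := fun r =>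
    Measurable.ite (measurableSet_lt measurable_norm measurable_const) (pw_measurable _)
      measurable_const
  have mker' : ∀ r : ℝ, Measurable (fun z : E3 => if r ≤ ‖z‖ then pw (-2) z else 0) := fun r =>
    Measurable.ite (measurableSet_le measurable_const measurable_norm) (pw_measurable _)
      measurable_const
  have msub : Measurable (fun z : E3 × E3 => z.1 - z.2) := measurable_fst.sub measurable_snd
  have mF : Measurable F := by
    have : Measurable (fun z : E3 × E3 => pw (-2) (z.1 - z.2) * f z.2) :=
      ((pw_measurable _).comp msub).mul (hf.comp measurable_snd)
    exact this.lintegral_prod_right'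
  set r : ℝ → ℝ := fun l => l ^ (-(q / 3)) with hr
  set h : ℝ → E3 → ℝ≥0∞ := fun l y => if ENNReal.ofReal (l ^ (q / p)) < f y then f y else 0 with hh
  have mh : ∀ l, Measurable (h l) := fun l =>
    Measurable.ite (measurableSet_lt measurable_const hf) hf measurable_const
  set D : ℝ → E3 → ℝ≥0∞ := fun l x => ∫⁻ y, (if ‖x - y‖ < r l then pw (-2) (x - y) else 0) * h l y
    with hD
  have hDm : ∀ l, Measurable (fun z : E3 × E3 =>
      (if ‖z.1 - z.2‖ < r l then pw (-2) (z.1 - z.2) else 0) * h l z.2) := fun l =>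
    ((mker (r l)).comp msub).mul ((mh l).comp measurable_snd)
  have mD : ∀ l, Measurable (D l) := fun l => (hDm l).lintegral_prod_right'
  have hFle : ∀ l : ℝ, 0 < l → ∀ x, F x ≤ ENNReal.ofReal (B2 * l) + ENNReal.ofReal (C1 * l) + D l x := by
    intro l hl x
    have hrl : 0 < r l := Real.rpow_pos_of_pos hl _
    have s1 : ∫⁻ y, (if r l ≤ ‖x - y‖ then pw (-2) (x - y) else 0) * f y ≤ ENNReal.ofReal (B2 * l) := by
      calc _ ≤ (∫⁻ y, (if r l ≤ ‖x - y‖ then pw (-2) (x - y) else 0) ^ p') ^ (1 / p') *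
            (∫⁻ y, f y ^ p) ^ (1 / p) :=
            ENNReal.lintegral_mul_le_Lp_mul_Lq volume hpp.symm
              ((mker' (r l)).comp (measurable_const.sub measurable_id)).aemeasurable hf.aemeasurable
        _ ≤ (ENNReal.ofReal (C2 * (r l) ^ (-2 * p' + 3))) ^ (1 / p') * 1 ^ (1 / p) := by
            gcongr
            refine le_trans (le_of_eq ?_) (hB (r l) hrl)
            rw [← lintegral_sub_left_eq_self (fun z : E3 => if r l ≤ ‖z‖ then pw (-2 * p') z else 0) x]
            refine lintegral_congr fun y => ?_
            split_ifs
            · rw [pw_rpow _ _ hp'0.le]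
            · simp [ENNReal.zero_rpow_of_pos hp'0]
        _ = ENNReal.ofReal (B2 * l) := by
            rw [ENNReal.one_rpow, mul_one, ENNReal.ofReal_rpow_of_nonneg (by positivity) (by positivity),
              Real.mul_rpow (by positivity) (by positivity), ← Real.rpow_mul hrl.le]
            congr 2
            simp only [hr]
            rw [← Real.rpow_mul hl.le]
            conv_rhs => rw [← Real.rpow_one l]
            congr 1
            have e1 : (-2 * p' + 3) * (1 / p') = -2 + 3 * (1 / p') := by field_simp
            rw [e1, hconj]
            have : 1 / p = 1 / q + 1 / 3 := by linarith
            rw [this]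
            field_simp
            ring
    have s2 : ∫⁻ y, (if ‖x - y‖ < r l then pw (-2) (x - y) else 0) *
        (if ENNReal.ofReal (l ^ (q / p)) < f y then 0 else f y) ≤ ENNReal.ofReal (C1 * l) := by
      calc _ ≤ ∫⁻ y, (if ‖x - y‖ < r l then pw (-2) (x - y) else 0) * ENNReal.ofReal (l ^ (q / p)) := by
            refine lintegral_mono fun y => ?_
            simp only
            gcongr
            split_ifs with hc
            · simp
            · exact not_lt.1 hc
        _ = (∫⁻ y, (if ‖x - y‖ < r l then pw (-2) (x - y) else 0)) * ENNReal.ofReal (l ^ (q / p)) :=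
            lintegral_mul_const _ ((mker (r l)).comp (measurable_const.sub measurable_id))
        _ ≤ ENNReal.ofReal (C1 * (r l) ^ (-2 + 3 : ℝ)) * ENNReal.ofReal (l ^ (q / p)) := by
            gcongr
            refine le_trans (le_of_eq ?_) (hA (r l) hrl)
            exact lintegral_sub_left_eq_self (fun z : E3 => if ‖z‖ < r l then pw (-2) z else 0) x
        _ = _ := by
            rw [← ENNReal.ofReal_mul (by positivity)]
            congr 1
            rw [show (-2 + 3 : ℝ) = 1 by norm_num, Real.rpow_one, mul_assoc]
            congr 1
            simp only [hr]
            rw [← Real.rpow_add hl]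
            conv_rhs => rw [← Real.rpow_one l]
            congr 1
            have e : q / p = q * (1 / p) := by ring
            have : 1 / p = 1 / q + 1 / 3 := by linarith
            rw [e, this]
            field_simp
            ring
    calc F x = ∫⁻ y, ((if r l ≤ ‖x - y‖ then pw (-2) (x - y) else 0) * f y +
          (if ‖x - y‖ < r l then pw (-2) (x - y) else 0) *
            (if ENNReal.ofReal (l ^ (q / p)) < f y then 0 else f y)) +
          (if ‖x - y‖ < r l then pw (-2) (x - y) else 0) * h l y := by
          refine lintegral_congr fun y => ?_
          simp only [hh]
          rcases lt_or_ge (‖x - y‖) (r l) with h1 | h1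
          · rcases lt_or_ge (ENNReal.ofReal (l ^ (q / p))) (f y) with h2 | h2
            · simp [h1, h2, not_le.2 h1]
            · simp [h1, not_lt.2 h2, not_le.2 h1]
          · simp [h1, not_lt.2 h1]
      _ = _ := by
          have w1 : Measurable (fun y : E3 =>
              (if ‖x - y‖ < r l then pw (-2) (x - y) else 0) * h l y) :=
            ((mker (r l)).comp (measurable_const.sub measurable_id)).mul (mh l)
          have w2 : Measurable (fun y : E3 =>
              (if r l ≤ ‖x - y‖ then pw (-2) (x - y) else 0) * f y) :=
            ((mker' (r l)).comp (measurable_const.sub measurable_id)).mul hf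
          rw [lintegral_add_right _ w1, lintegral_add_left w2]
      _ ≤ _ := by
          simp only [hD]
          gcongr
  have hDint : ∀ l : ℝ, 0 < l → ∫⁻ x, D l x ≤ ENNReal.ofReal (C1 * r l) * ∫⁻ y, h l y := by
    intro l hl
    have hrl : 0 < r l := Real.rpow_pos_of_pos hl _
    calc ∫⁻ x, D l x = ∫⁻ y, ∫⁻ x, (if ‖x - y‖ < r l then pw (-2) (x - y) else 0) * h l y :=
          lintegral_lintegral_swap (hDm l).aemeasurable
      _ = ∫⁻ y, (∫⁻ x, (if ‖x - y‖ < r l then pw (-2) (x - y) else 0)) * h l y := by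
          refine lintegral_congr fun y => ?_
          exact lintegral_mul_const _ ((mker (r l)).comp (measurable_id.sub measurable_const))
      _ ≤ ∫⁻ y, ENNReal.ofReal (C1 * r l) * h l y := by
          refine lintegral_mono fun y => ?_
          simp only
          gcongr
          have := hA (r l) hrl
          rw [show (-2 + 3 : ℝ) = 1 by norm_num, Real.rpow_one] at this
          refine le_trans (le_of_eq ?_) this
          exact lintegral_sub_right_eq_self (fun z : E3 => if ‖z‖ < r l then pw (-2) z else 0) y
      _ = _ := lintegral_const_mul _ (mh l)
  set u : E3 → ℝ≥0∞ := fun x => F x / ENNReal.ofReal K with hu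
  have mu : Measurable u := mF.div_const _
  have hmeas : ∀ l : ℝ, 0 < l → volume {x | ENNReal.ofReal l < u x} ≤
      ENNReal.ofReal (C1 * r l / l) * ∫⁻ y, h l y := by
    intro l hl
    have hl' : ENNReal.ofReal l ≠ 0 := by simpa using hl
    have hsub : {x | ENNReal.ofReal l < u x} ⊆ {x | ENNReal.ofReal l ≤ D l x} := by
      intro x hx
      simp only [Set.mem_ofPred_eq] at hx ⊢
      by_contra hcon
      push Not at hcon
      have h1 := hFle l hl x
      have : F x ≤ ENNReal.ofReal l * ENNReal.ofReal K := by
        calc F x ≤ ENNReal.ofReal (B2 * l) + ENNReal.ofReal (C1 * l) + ENNReal.ofReal l := by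
              refine h1.trans ?_; gcongr
          _ = _ := by
              rw [← ENNReal.ofReal_add (by positivity) (by positivity),
                ← ENNReal.ofReal_add (by positivity) (by positivity), ← ENNReal.ofReal_mul hl.le]
              congr 1; rw [hK]; ring
      have h2 : u x ≤ ENNReal.ofReal l := ENNReal.div_le_of_le_mul this
      exact absurd hx (not_lt.2 h2)
    calc _ ≤ volume {x | ENNReal.ofReal l ≤ D l x} := measure_mono hsub
      _ ≤ (∫⁻ x, D l x) / ENNReal.ofReal l :=
          meas_ge_le_lintegral_div (mD l).aemeasurable hl' ENNReal.ofReal_ne_top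
      _ ≤ (ENNReal.ofReal (C1 * r l) * ∫⁻ y, h l y) / ENNReal.ofReal l := by
          gcongr; exact hDint l hl
      _ = _ := by
          rw [ENNReal.ofReal_div_of_pos hl, div_eq_mul_inv, div_eq_mul_inv]; ring
  have hq' : ENNReal.ofReal q * ENNReal.ofReal (1 / q) = 1 := by
    rw [← ENNReal.ofReal_mul hq0.le]; simp [hq0.ne']
  have mlay : Measurable (fun z : E3 × ℝ =>
      if ENNReal.ofReal z.2 < u z.1 then ENNReal.ofReal (z.2 ^ (q - 1)) else 0) := by
    refine Measurable.ite (measurableSet_lt (by fun_prop) (mu.comp measurable_fst)) (by fun_prop)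
      measurable_const
  have mlay2 : Measurable (fun z : ℝ × E3 =>
      ENNReal.ofReal (z.1 ^ (m - 1)) * h z.1 z.2) := by
    refine Measurable.mul (by fun_prop) ?_
    exact Measurable.ite (measurableSet_lt (by fun_prop) (hf.comp measurable_snd))
      (hf.comp measurable_snd) measurable_const
  have main : ∫⁻ x, u x ^ q ≤ ENNReal.ofReal q * (ENNReal.ofReal C1 * ENNReal.ofReal (1 / m)) := by
    calc ∫⁻ x, u x ^ q = ∫⁻ x, ENNReal.ofReal q * ∫⁻ l in Set.Ioi (0:ℝ),
          (if ENNReal.ofReal l < u x then ENNReal.ofReal (l ^ (q - 1)) else 0) := by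
          refine lintegral_congr fun x => ?_
          rw [layer q hq0, ← mul_assoc, hq', one_mul]
      _ = ENNReal.ofReal q * ∫⁻ x, ∫⁻ l in Set.Ioi (0:ℝ),
          (if ENNReal.ofReal l < u x then ENNReal.ofReal (l ^ (q - 1)) else 0) :=
          lintegral_const_mul _ mlay.lintegral_prod_right'
      _ = ENNReal.ofReal q * ∫⁻ l in Set.Ioi (0:ℝ), ∫⁻ x,
          (if ENNReal.ofReal l < u x then ENNReal.ofReal (l ^ (q - 1)) else 0) := by
          rw [lintegral_lintegral_swap mlay.aemeasurable]
      _ ≤ ENNReal.ofReal q * ∫⁻ l in Set.Ioi (0:ℝ), ∫⁻ y, ENNReal.ofReal C1 *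
            (ENNReal.ofReal (l ^ (m - 1)) * h l y) := by
          gcongr ENNReal.ofReal q * ?_
          refine setLIntegral_mono' measurableSet_Ioi fun l hl => ?_
          have hl : 0 < l := hl
          have hrl : 0 < r l := Real.rpow_pos_of_pos hl _
          calc ∫⁻ x, (if ENNReal.ofReal l < u x then ENNReal.ofReal (l ^ (q - 1)) else 0)
              = ENNReal.ofReal (l ^ (q - 1)) * volume {x | ENNReal.ofReal l < u x} := by
                rw [← lintegral_indicator_const (measurableSet_lt measurable_const mu)]
                refine lintegral_congr fun x => ?_
                simp [Set.indicator_apply]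
            _ ≤ ENNReal.ofReal (l ^ (q - 1)) * (ENNReal.ofReal (C1 * r l / l) * ∫⁻ y, h l y) := by
                gcongr; exact hmeas l hl
            _ = ENNReal.ofReal C1 * (ENNReal.ofReal (l ^ (m - 1)) * ∫⁻ y, h l y) := by
                rw [← mul_assoc, ← mul_assoc, ← ENNReal.ofReal_mul (by positivity),
                  ← ENNReal.ofReal_mul (by positivity)]
                congr 2
                rw [show m - 1 = (q - 1) + -(q/3) + -1 by rw [hm]; ring, Real.rpow_add hl,
                  Real.rpow_add hl, Real.rpow_neg_one]
                simp only [hr]; ring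
            _ = _ := by
                rw [← lintegral_const_mul _ (mh l), ← lintegral_const_mul]
                exact (mh l).const_mul _
      _ = ENNReal.ofReal q * (ENNReal.ofReal C1 * ∫⁻ y, ∫⁻ l in Set.Ioi (0:ℝ),
            ENNReal.ofReal (l ^ (m - 1)) * h l y) := by
          rw [lintegral_lintegral_swap (mlay2.const_mul _).aemeasurable,
            ← lintegral_const_mul (ENNReal.ofReal C1)]
          · congr 1
            refine lintegral_congr fun y => ?_
            rw [lintegral_const_mul]
            exact mlay2.comp measurable_prodMk_right
          · exact (mlay2.comp measurable_swap).lintegral_prod_right'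
      _ = ENNReal.ofReal q * (ENNReal.ofReal C1 * ∫⁻ y, ENNReal.ofReal (1 / m) * f y ^ p) := by
          congr 2
          refine lintegral_congr fun y => ?_
          have e : ∀ l ∈ Set.Ioi (0:ℝ), ENNReal.ofReal (l ^ (m - 1)) * h l y =
              f y * (if ENNReal.ofReal l < f y ^ (p / q) then ENNReal.ofReal (l ^ (m - 1)) else 0) := by
            intro l hl
            have hl : 0 < l := hl
            have : (ENNReal.ofReal l < f y ^ (p / q)) ↔ (ENNReal.ofReal (l ^ (q / p)) < f y) := by
              rw [← ENNReal.ofReal_rpow_of_pos hl, ← ENNReal.rpow_lt_rpow_iff (show 0 < q / p by positivity),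
                ← ENNReal.rpow_mul, show p / q * (q / p) = 1 by field_simp, ENNReal.rpow_one]
            simp only [hh, this]
            split_ifs
            · ring
            · simp
          rw [setLIntegral_congr_fun measurableSet_Ioi e, lintegral_const_mul, layer m hm0,
            ← ENNReal.rpow_mul]
          · have e2 : p / q * m = p - 1 := by rw [hmq]; field_simp
            rw [e2]
            conv_rhs => rw [show p = 1 + (p - 1) by ring,
              ENNReal.rpow_add_of_nonneg _ _ zero_le_one (by linarith), ENNReal.rpow_one]
            ring
          · exact Measurable.ite (measurableSet_lt (by fun_prop) measurable_const) (by fun_prop)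
              measurable_const
      _ = ENNReal.ofReal q * (ENNReal.ofReal C1 * (ENNReal.ofReal (1 / m) * ∫⁻ y, f y ^ p)) := by
          rw [lintegral_const_mul _ (hf.pow_const _)]
      _ ≤ ENNReal.ofReal q * (ENNReal.ofReal C1 * (ENNReal.ofReal (1 / m) * 1)) := by gcongr
      _ = _ := by rw [mul_one]
  calc ∫⁻ x, F x ^ q = ∫⁻ x, ENNReal.ofReal K ^ q * u x ^ q := by
        refine lintegral_congr fun x => ?_
        rw [← ENNReal.mul_rpow_of_nonneg _ _ hq0.le]
        congr 1
        simp only [hu]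
        rw [ENNReal.mul_div_cancel (by simpa using hKp) ENNReal.ofReal_ne_top]
    _ = ENNReal.ofReal K ^ q * ∫⁻ x, u x ^ q := lintegral_const_mul _ (mu.pow_const _)
    _ ≤ _ := by gcongr

lemma kdiff (x y : E3) (h : 2 * ‖y‖ < ‖x‖) :
    ‖(1 / ‖x - y‖ ^ 3) • (x - y) - (1 / ‖x‖ ^ 3) • x‖ ≤ 46 * (‖y‖ / ‖x‖ ^ 3) := by
  have hy := norm_nonneg y
  have hx : 0 < ‖x‖ := by linarith
  have t1 : ‖x‖ - ‖y‖ ≤ ‖x - y‖ := norm_sub_norm_le x y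
  have t2 : ‖x - y‖ ≤ ‖x‖ + ‖y‖ := norm_sub_le x y
  set u := ‖x - y‖ with hu
  set X := ‖x‖ with hX
  set Y := ‖y‖ with hY
  have hu0 : 0 < u := by linarith
  have e : (1 / u ^ 3) • (x - y) - (1 / X ^ 3) • x
      = (-(1 / u ^ 3)) • y + ((1 / u ^ 3) - (1 / X ^ 3)) • x := by
    module
  have hu3 : X ^ 3 / 8 ≤ u ^ 3 := by
    have : X / 2 ≤ u := by linarith
    calc X ^ 3 / 8 = (X / 2) ^ 3 := by ring
      _ ≤ u ^ 3 := by gcongr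
  have i1 : 1 / u ^ 3 ≤ 8 / X ^ 3 := by
    rw [div_le_div_iff₀ (by positivity) (by positivity)]; linarith
  have i2 : |1 / u ^ 3 - 1 / X ^ 3| * X ≤ 38 * (Y / X ^ 3) := by
    have : 1 / u ^ 3 - 1 / X ^ 3 = (1 / u ^ 3) * ((X - u) * (X ^ 2 + X * u + u ^ 2)) / X ^ 3 := by
      field_simp; ring
    rw [this, abs_div, abs_mul, abs_mul, abs_of_pos (show 0 < 1 / u ^ 3 by positivity),
      abs_of_pos (show 0 < X ^ 3 by positivity),
      abs_of_pos (show 0 < X ^ 2 + X * u + u ^ 2 by positivity)]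
    have j1 : |X - u| ≤ Y := by rw [abs_le]; constructor <;> linarith
    have j2 : X ^ 2 + X * u + u ^ 2 ≤ 19 / 4 * X ^ 2 := by
      have : u ≤ 3 / 2 * X := by linarith
      nlinarith
    calc _ ≤ (8 / X ^ 3) * (Y * (19 / 4 * X ^ 2)) / X ^ 3 * X := by gcongr
      _ = _ := by field_simp; ring
  rw [e]
  calc _ ≤ ‖(-(1 / u ^ 3)) • y‖ + ‖((1 / u ^ 3) - (1 / X ^ 3)) • x‖ := norm_add_le _ _
    _ = 1 / u ^ 3 * Y + |1 / u ^ 3 - 1 / X ^ 3| * X := by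
        rw [norm_smul, norm_smul, norm_neg, Real.norm_eq_abs, Real.norm_eq_abs,
          abs_of_pos (show 0 < 1 / u ^ 3 by positivity)]
    _ ≤ 8 / X ^ 3 * Y + 38 * (Y / X ^ 3) := by gcongr
    _ = _ := by ring

lemma knorm (b : ℝ) (z : E3) : ‖(b / ‖z‖ ^ 3) • z‖ = ‖z‖ ^ (-2 : ℝ) * |b| := by
  rw [norm_smul, Real.norm_eq_abs, abs_div, abs_of_nonneg (show 0 ≤ ‖z‖ ^ 3 by positivity)]
  rcases eq_or_lt_of_le (norm_nonneg z) with h | h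
  · rw [← h]; simp
  · rw [Real.rpow_neg h.le]; norm_num; field_simp

lemma vb1 (n : ℝ) (hn : 1 ≤ n) (x y : E3) (b : ℝ) (hx : ‖x‖ ≤ 1) :
    (1 + ‖x‖) ^ n * ‖(b / ‖x - y‖ ^ 3) • (x - y)‖ ≤
      2 ^ n * (‖x - y‖ ^ (-2 : ℝ) * ((1 + ‖y‖) ^ n * |b|)) := by
  rw [knorm]
  have h1 : (1 + ‖x‖) ^ n ≤ 2 ^ n := Real.rpow_le_rpow (by positivity) (by linarith) (by linarith)
  have h2 : 1 ≤ (1 + ‖y‖) ^ n := Real.one_le_rpow (by linarith [norm_nonneg y]) (by linarith)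
  gcongr
  exact le_mul_of_one_le_left (abs_nonneg _) h2

lemma vb_aux (n : ℝ) (hn : 1 ≤ n) (x : E3) (hx : 1 < ‖x‖) : (1 + ‖x‖) ^ n ≤ 2 ^ n * ‖x‖ ^ n := by
  rw [← Real.mul_rpow (by norm_num) (by positivity)]
  exact Real.rpow_le_rpow (by positivity) (by linarith) (by linarith)

lemma vb_aux2 (n : ℝ) (hn : 1 ≤ n) (y : E3) (hy : y ≠ 0) (b : ℝ) :
    |b| ≤ ‖y‖ ^ (-n) * ((1 + ‖y‖) ^ n * |b|) := by
  have hy := norm_pos_iff.2 hy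
  have : 1 ≤ ‖y‖ ^ (-n) * (1 + ‖y‖) ^ n := by
    calc 1 = ‖y‖ ^ (-n) * ‖y‖ ^ n := by rw [← Real.rpow_add hy]; simp
      _ ≤ _ := by gcongr; linarith
  rw [← mul_assoc]
  exact le_mul_of_one_le_left (abs_nonneg _) this

lemma vb2 (n : ℝ) (hn : 1 ≤ n) (x y : E3) (b : ℝ) (hx : 1 < ‖x‖) (hy : y ≠ 0)
    (h : 2 * ‖y‖ < ‖x‖) :
    (1 + ‖x‖) ^ n * ‖(b / ‖x - y‖ ^ 3) • (x - y) - (b / ‖x‖ ^ 3) • x‖ ≤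
      46 * 2 ^ n * (‖x‖ ^ (n - 3) * (‖y‖ ^ (1 - n) * ((1 + ‖y‖) ^ n * |b|))) := by
  have hX : 0 < ‖x‖ := by linarith
  have e : (b / ‖x - y‖ ^ 3) • (x - y) - (b / ‖x‖ ^ 3) • x
      = b • ((1 / ‖x - y‖ ^ 3) • (x - y) - (1 / ‖x‖ ^ 3) • x) := by
    rw [smul_sub b, smul_smul, smul_smul, mul_one_div, mul_one_div]
  rw [e, norm_smul, Real.norm_eq_abs]
  have h1 := vb_aux n hn x hx
  have h2 := kdiff x y h
  have h3 := vb_aux2 n hn y hy b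
  have hy' := norm_pos_iff.2 hy
  calc _ ≤ (2 ^ n * ‖x‖ ^ n) * ((‖y‖ ^ (-n) * ((1 + ‖y‖) ^ n * |b|)) * (46 * (‖y‖ / ‖x‖ ^ 3))) := by
        gcongr
    _ = _ := by
        rw [Real.rpow_sub hX, Real.rpow_sub hy', Real.rpow_neg hy'.le, Real.rpow_one]
        norm_num
        field_simp

lemma vb3 (n : ℝ) (hn : 1 ≤ n) (x y : E3) (b : ℝ) (hx : 1 < ‖x‖) (hy : y ≠ 0)
    (h : ‖x‖ ≤ 2 * ‖y‖) :
    (1 + ‖x‖) ^ n * ‖(b / ‖x - y‖ ^ 3) • (x - y) - (b / ‖x‖ ^ 3) • x‖ ≤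
      2 ^ n * (‖x - y‖ ^ (-2 : ℝ) * ((1 + ‖y‖) ^ n * |b|) +
        ‖x‖ ^ (n - 2) * (‖y‖ ^ (-n) * ((1 + ‖y‖) ^ n * |b|))) := by
  have hX : 0 < ‖x‖ := by linarith
  have h1 := vb_aux n hn x hx
  have h3 := vb_aux2 n hn y hy b
  have h4 : (1 + ‖x‖) ^ n ≤ 2 ^ n * (1 + ‖y‖) ^ n := by
    rw [← Real.mul_rpow (by norm_num) (by positivity)]
    exact Real.rpow_le_rpow (by positivity) (by linarith) (by linarith)
  calc _ ≤ (1 + ‖x‖) ^ n * (‖x - y‖ ^ (-2 : ℝ) * |b| + ‖x‖ ^ (-2 : ℝ) * |b|) := by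
        gcongr
        rw [← knorm, ← knorm]
        exact norm_sub_le _ _
    _ = (1 + ‖x‖) ^ n * (‖x - y‖ ^ (-2 : ℝ) * |b|) + (1 + ‖x‖) ^ n * (‖x‖ ^ (-2 : ℝ) * |b|) := by
        ring
    _ ≤ (2 ^ n * (1 + ‖y‖) ^ n) * (‖x - y‖ ^ (-2 : ℝ) * |b|) + (2 ^ n * ‖x‖ ^ n) *
          (‖x‖ ^ (-2 : ℝ) * (‖y‖ ^ (-n) * ((1 + ‖y‖) ^ n * |b|))) := by gcongr
    _ = _ := by
        rw [sub_eq_add_neg n 2, Real.rpow_add hX]; ring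

/-- the majorant -/
def Smaj (n : ℝ) (f : E3 → ℝ≥0∞) (x : E3) : ℝ≥0∞ :=
  (∫⁻ y, pw (-2) (x - y) * f y) +
    pw (-2 - (1 - n)) x * (∫⁻ y, (if 2 * ‖y‖ < ‖x‖ then pw (1 - n) y * f y else 0)) +
    pw (-2 - (-n)) x * (∫⁻ y, (if ‖x‖ ≤ 2 * ‖y‖ then pw (-n) y * f y else 0))

lemma Smaj_pt (n : ℝ) (hn : 1 ≤ n) (a : E3 → ℝ) (hac : Measurable a) (ha : Integrable a)
    (ha0 : ∫ y, a y = 0) (x : E3) :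
    ENNReal.ofReal ((1 + ‖x‖) ^ n * ‖PiOp a x‖) ≤ ENNReal.ofReal (46 * 2 ^ n) *
      Smaj n (fun y => ENNReal.ofReal ((1 + ‖y‖) ^ n * |a y|)) x := by
  set f : E3 → ℝ≥0∞ := fun y => ENNReal.ofReal ((1 + ‖y‖) ^ n * |a y|) with hf
  have mf : Measurable f := by
    simp only [hf]
    have : Measurable fun y => |a y| := hac.abs
    fun_prop
  have hM : (0:ℝ) < 2 ^ n := by positivity
  have key : ∀ V : E3 → E3, PiOp a x = (-(1 / (4 * π))) • ∫ y, V y →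
      (∀ y, y ≠ 0 → ENNReal.ofReal ((1 + ‖x‖) ^ n * ‖V y‖) ≤ ENNReal.ofReal (46 * 2 ^ n) *
        (pw (-2) (x - y) * f y +
          pw (-2 - (1 - n)) x * (if 2 * ‖y‖ < ‖x‖ then pw (1 - n) y * f y else 0) +
          pw (-2 - (-n)) x * (if ‖x‖ ≤ 2 * ‖y‖ then pw (-n) y * f y else 0))) →
      ENNReal.ofReal ((1 + ‖x‖) ^ n * ‖PiOp a x‖) ≤ ENNReal.ofReal (46 * 2 ^ n) * Smaj n f x := by
    intro V hV hb
    have hπ : ‖PiOp a x‖ ≤ ‖∫ y, V y‖ := by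
      rw [hV, norm_smul, norm_neg, Real.norm_eq_abs, abs_of_pos (by positivity)]
      refine mul_le_of_le_one_left (norm_nonneg _) ?_
      rw [div_le_one (by positivity)]
      linarith [Real.pi_gt_three]
    have m1 : Measurable fun y => pw (-2) (x - y) * f y :=
      ((pw_measurable _).comp (measurable_const.sub measurable_id)).mul mf
    have m2 : Measurable fun y => (if 2 * ‖y‖ < ‖x‖ then pw (1 - n) y * f y else 0) :=
      Measurable.ite (measurableSet_lt (by fun_prop) measurable_const)
        ((pw_measurable _).mul mf) measurable_const
    have m3 : Measurable fun y => (if ‖x‖ ≤ 2 * ‖y‖ then pw (-n) y * f y else 0) :=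
      Measurable.ite (measurableSet_le measurable_const (by fun_prop))
        ((pw_measurable _).mul mf) measurable_const
    calc ENNReal.ofReal ((1 + ‖x‖) ^ n * ‖PiOp a x‖)
        ≤ ENNReal.ofReal ((1 + ‖x‖) ^ n * ‖∫ y, V y‖) := by gcongr
      _ = ENNReal.ofReal ((1 + ‖x‖) ^ n) * ‖∫ y, V y‖ₑ := by
          rw [ENNReal.ofReal_mul (by positivity), ofReal_norm]
      _ ≤ ENNReal.ofReal ((1 + ‖x‖) ^ n) * ∫⁻ y, ‖V y‖ₑ := by
          gcongr; exact enorm_integral_le_lintegral_enorm _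
      _ = ∫⁻ y, ENNReal.ofReal ((1 + ‖x‖) ^ n) * ‖V y‖ₑ :=
          (lintegral_const_mul' _ _ ENNReal.ofReal_ne_top).symm
      _ ≤ ∫⁻ y, ENNReal.ofReal (46 * 2 ^ n) *
        (pw (-2) (x - y) * f y +
          pw (-2 - (1 - n)) x * (if 2 * ‖y‖ < ‖x‖ then pw (1 - n) y * f y else 0) +
          pw (-2 - (-n)) x * (if ‖x‖ ≤ 2 * ‖y‖ then pw (-n) y * f y else 0)) := by
          refine lintegral_mono_ae ?_
          filter_upwards [ae_ne_zero3] with y hy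
          have := hb y hy
          rwa [ENNReal.ofReal_mul (by positivity), ofReal_norm] at this
      _ = _ := by
          rw [lintegral_const_mul' _ _ ENNReal.ofReal_ne_top,
            lintegral_add_right _ (m3.const_mul _), lintegral_add_left m1,
            lintegral_const_mul _ m2, lintegral_const_mul _ m3]
          rfl
  have conv0 : ∀ y, pw (-2) (x - y) * f y =
      ENNReal.ofReal (‖x - y‖ ^ (-2:ℝ) * ((1 + ‖y‖) ^ n * |a y|)) := fun y => by
    rw [ENNReal.ofReal_mul (by positivity)]; rfl
  have conv1 : ∀ α β y, pw α x * (pw β y * f y) =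
      ENNReal.ofReal (‖x‖ ^ α * (‖y‖ ^ β * ((1 + ‖y‖) ^ n * |a y|))) := fun α β y => by
    rw [ENNReal.ofReal_mul (by positivity), ENNReal.ofReal_mul (by positivity)]; rfl
  rcases le_or_gt (‖x‖) 1 with hx | hx
  · refine key (fun y => (a y / ‖x - y‖ ^ 3) • (x - y)) rfl fun y hy => ?_
    calc _ ≤ ENNReal.ofReal (46 * 2 ^ n * (‖x - y‖ ^ (-2 : ℝ) * ((1 + ‖y‖) ^ n * |a y|))) := by
          apply ENNReal.ofReal_le_ofReal
          refine (vb1 n hn x y (a y) hx).trans ?_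
          gcongr
          linarith
      _ = ENNReal.ofReal (46 * 2 ^ n) * (pw (-2) (x - y) * f y) := by
          rw [conv0, ← ENNReal.ofReal_mul (by positivity)]
      _ ≤ _ := by
          gcongr
          rw [add_assoc]
          exact le_self_add
  · by_cases hint : Integrable (fun y => (a y / ‖x - y‖ ^ 3) • (x - y))
    · refine key (fun y => (a y / ‖x - y‖ ^ 3) • (x - y) - (a y / ‖x‖ ^ 3) • x) ?_ fun y hy => ?_
      · have h2 : Integrable (fun y => (a y / ‖x‖ ^ 3) • x) := (ha.div_const _).smul_const _
        rw [integral_sub hint h2, integral_smul_const, integral_div, ha0]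
        simp [PiOp]
      · rcases lt_or_ge (2 * ‖y‖) (‖x‖) with h | h
        · rw [if_pos h, if_neg (not_le.2 h), mul_zero, add_zero]
          calc _ ≤ ENNReal.ofReal (46 * 2 ^ n * (‖x‖ ^ (n - 3) * (‖y‖ ^ (1 - n) *
                  ((1 + ‖y‖) ^ n * |a y|)))) := by
                apply ENNReal.ofReal_le_ofReal
                exact vb2 n hn x y (a y) hx hy h
            _ = ENNReal.ofReal (46 * 2 ^ n) * (pw (-2 - (1 - n)) x * (pw (1 - n) y * f y)) := by
                rw [conv1, ← ENNReal.ofReal_mul (by positivity), show -2 - (1 - n) = n - 3 by ring]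
            _ ≤ _ := by
                gcongr
                exact le_add_self
        · rw [if_neg (not_lt.2 h), if_pos h, mul_zero, add_zero, conv0, conv1,
            ← ENNReal.ofReal_add (by positivity) (by positivity), ← ENNReal.ofReal_mul (by positivity)]
          apply ENNReal.ofReal_le_ofReal
          refine (vb3 n hn x y (a y) hx hy h).trans ?_
          rw [show -2 - (-n) = n - 2 by ring]
          gcongr
          linarith
    · have : PiOp a x = 0 := by
        unfold PiOp
        rw [integral_undef hint, smul_zero]
      simp [this]

lemma Smaj_smul (n : ℝ) (f : E3 → ℝ≥0∞) (c : ℝ≥0∞) (hc : c ≠ ⊤) (x : E3) :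
    Smaj n (fun y => c * f y) x = c * Smaj n f x := by
  unfold Smaj
  have e1 : ∀ y, pw (-2) (x - y) * (c * f y) = c * (pw (-2) (x - y) * f y) := fun y => by ring
  have e2 : ∀ y, (if 2 * ‖y‖ < ‖x‖ then pw (1 - n) y * (c * f y) else 0) =
      c * (if 2 * ‖y‖ < ‖x‖ then pw (1 - n) y * f y else 0) := fun y => by
    split_ifs <;> ring
  have e3 : ∀ y, (if ‖x‖ ≤ 2 * ‖y‖ then pw (-n) y * (c * f y) else 0) =
      c * (if ‖x‖ ≤ 2 * ‖y‖ then pw (-n) y * f y else 0) := fun y => by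
    split_ifs <;> ring
  simp_rw [e1, e2, e3]
  rw [lintegral_const_mul' _ _ hc, lintegral_const_mul' _ _ hc, lintegral_const_mul' _ _ hc]
  ring

lemma Smaj_zero (n : ℝ) (f : E3 → ℝ≥0∞) (hf : f =ᵐ[volume] 0) (x : E3) : Smaj n f x = 0 := by
  unfold Smaj
  have z : ∀ g : E3 → ℝ≥0∞, (∀ y, f y = 0 → g y = 0) → ∫⁻ y, g y = 0 := by
    intro g hg
    rw [← lintegral_zero]
    apply lintegral_congr_ae
    filter_upwards [hf] with y hy using hg y hy
  rw [z _ (fun y hy => by simp [hy]), z _ (fun y hy => by simp [hy]), z _ (fun y hy => by simp [hy])]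
  simp

lemma hardy1 (n p q p' : ℝ) (hpp : p.HolderConjugate p') (hpq : p < q)
    (hrel : 1 / q = 1 / p - 1 / 3) (hhi : 1 / p < (4 - n) / 3) :
    ∃ C : ℝ≥0∞, C ≠ ⊤ ∧ ∀ f : E3 → ℝ≥0∞, Measurable f → ∫⁻ y, f y ^ p ≤ 1 →
      ∫⁻ x, (pw (-2 - (1 - n)) x *
        ∫⁻ y, (if 2 * ‖y‖ < ‖x‖ then pw (1 - n) y * f y else 0)) ^ q ≤ C := by
  have hp0 : 0 < p := hpp.pos
  have hp'0 : 0 < p' := hpp.symm.pos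
  have hconj : 1 / p' = 1 - 1 / p := by
    have := hpp.inv_add_inv_eq_one; simp only [one_div]; linarith
  set s : ℝ := (3 * (1 / p') - (n - 1)) / 2 with hs
  have hs0 : 0 < s := by rw [hs, hconj]; linarith
  have hs1 : -3 < (1 - n - s) * p' := by
    have : -3 * (1 / p') < 1 - n - s := by rw [hs]; rw [hs] at hs0; linarith
    have := mul_lt_mul_of_pos_right this hp'0
    rwa [mul_assoc, one_div_mul_cancel hp'0.ne', mul_one] at this
  have hsp : 0 < s * p := mul_pos hs0 hp0
  obtain ⟨A, hA, hA'⟩ := pw_int_ball _ hs1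
  obtain ⟨B, hB, hB'⟩ := pw_int_compl (-3 - s * p) (by linarith)
  refine hardy p q p' (1 - n) s hpp hpq hrel (fun x y => 2 * ‖y‖ < ‖x‖)
    (measurableSet_lt (by fun_prop) (by fun_prop))
    (ENNReal.ofReal (A * (1 / 2) ^ ((1 - n - s) * p' + 3))) 1
    (ENNReal.ofReal (B * 2 ^ (-(s * p)))) ENNReal.ofReal_ne_top ENNReal.one_ne_top
    ENNReal.ofReal_ne_top ?_ ?_ ?_
  · intro x hx
    have hx := norm_pos_iff.2 hx
    have := hA' (1 / 2 * ‖x‖) (by positivity)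
    rw [Real.mul_rpow (by norm_num) (norm_nonneg _), ← mul_assoc,
      ENNReal.ofReal_mul (by positivity)] at this
    refine le_trans (lintegral_mono fun y => ?_) this
    split_ifs with h1 h2
    · exact le_rfl
    · exact absurd (by linarith) h2
    · simp
    · simp
  · intro x y hx hy h
    rw [one_mul]
    apply ENNReal.ofReal_le_ofReal
    exact Real.rpow_le_rpow (norm_nonneg _) (by linarith [norm_nonneg y]) hsp.le
  · intro y hy
    have hy := norm_pos_iff.2 hy
    have := hB' (2 * ‖y‖) (by positivity)
    rw [Real.mul_rpow (by norm_num) (norm_nonneg _), ← mul_assoc,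
      show -3 - s * p + 3 = -(s * p) by ring, ENNReal.ofReal_mul (by positivity)] at this
    refine le_trans (lintegral_mono fun y => ?_) this
    split_ifs with h1 h2
    · exact le_rfl
    · exact absurd (by linarith) h2
    · simp
    · simp

lemma hardy2 (n p q p' : ℝ) (hpp : p.HolderConjugate p') (hpq : p < q)
    (hrel : 1 / q = 1 / p - 1 / 3) (hlo : (3 - n) / 3 < 1 / p) :
    ∃ C : ℝ≥0∞, C ≠ ⊤ ∧ ∀ f : E3 → ℝ≥0∞, Measurable f → ∫⁻ y, f y ^ p ≤ 1 →
      ∫⁻ x, (pw (-2 - (-n)) x *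
        ∫⁻ y, (if ‖x‖ ≤ 2 * ‖y‖ then pw (-n) y * f y else 0)) ^ q ≤ C := by
  have hp0 : 0 < p := hpp.pos
  have hp'0 : 0 < p' := hpp.symm.pos
  have hconj : 1 / p' = 1 - 1 / p := by
    have := hpp.inv_add_inv_eq_one; simp only [one_div]; linarith
  set s : ℝ := (3 * (1 / p') - n) / 2 with hs
  have hs0 : s < 0 := by rw [hs, hconj]; linarith
  have hs1 : (-n - s) * p' < -3 := by
    have : -n - s < -3 * (1 / p') := by rw [hs]; rw [hs] at hs0; linarith
    have := mul_lt_mul_of_pos_right this hp'0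
    rwa [mul_assoc, one_div_mul_cancel hp'0.ne', mul_one] at this
  have hsp : s * p < 0 := mul_neg_of_neg_of_pos hs0 hp0
  obtain ⟨A, hA, hA'⟩ := pw_int_compl _ hs1
  obtain ⟨B, hB, hB'⟩ := pw_int_ball (-3 - s * p) (by linarith)
  refine hardy p q p' (-n) s hpp hpq hrel (fun x y => ‖x‖ ≤ 2 * ‖y‖)
    (measurableSet_le (by fun_prop) (by fun_prop))
    (ENNReal.ofReal (A * (1 / 2) ^ ((-n - s) * p' + 3))) (ENNReal.ofReal ((1 / 2) ^ (s * p)))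
    (ENNReal.ofReal (B * 3 ^ (-(s * p)))) ENNReal.ofReal_ne_top ENNReal.ofReal_ne_top
    ENNReal.ofReal_ne_top ?_ ?_ ?_
  · intro x hx
    have hx := norm_pos_iff.2 hx
    have := hA' (1 / 2 * ‖x‖) (by positivity)
    rw [Real.mul_rpow (by norm_num) (norm_nonneg _), ← mul_assoc,
      ENNReal.ofReal_mul (by positivity)] at this
    refine le_trans (lintegral_mono fun y => ?_) this
    split_ifs with h1 h2
    · exact le_rfl
    · exact absurd (by linarith) h2
    · simp
    · simp
  · intro x y hx hy h
    have hx := norm_pos_iff.2 hx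
    unfold pw
    rw [← ENNReal.ofReal_mul (by positivity), ← Real.mul_rpow (by norm_num) (norm_nonneg _)]
    apply ENNReal.ofReal_le_ofReal
    exact Real.rpow_le_rpow_of_nonpos (by positivity) (by linarith) hsp.le
  · intro y hy
    have hy := norm_pos_iff.2 hy
    have := hB' (3 * ‖y‖) (by positivity)
    rw [Real.mul_rpow (by norm_num) (norm_nonneg _), ← mul_assoc,
      show -3 - s * p + 3 = -(s * p) by ring, ENNReal.ofReal_mul (by positivity)] at this
    refine le_trans (lintegral_mono fun y => ?_) this
    split_ifs with h1 h2
    · exact le_rfl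
    · exact absurd (by linarith) h2
    · simp
    · simp

lemma Smaj_norm (n p q p' : ℝ) (hpp : p.HolderConjugate p') (hpq : p < q)
    (hrel : 1 / q = 1 / p - 1 / 3) (hlo : (3 - n) / 3 < 1 / p) (hhi : 1 / p < (4 - n) / 3) :
    ∃ C : ℝ≥0∞, C ≠ ⊤ ∧ ∀ f : E3 → ℝ≥0∞, Measurable f → ∫⁻ y, f y ^ p ≤ 1 →
      ∫⁻ x, Smaj n f x ^ q ≤ C := by
  have hq1 : 1 ≤ q := hpp.lt.le.trans hpq.le
  obtain ⟨A, hA, hA'⟩ := hls p q p' hpp hpq hrel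
  obtain ⟨B, hB, hB'⟩ := hardy1 n p q p' hpp hpq hrel hhi
  obtain ⟨D, hD, hD'⟩ := hardy2 n p q p' hpp hpq hrel hlo
  set k : ℝ≥0∞ := 2 ^ (q - 1) with hk
  have hkt : k ≠ ⊤ := ENNReal.rpow_ne_top_of_nonneg (by linarith) (by norm_num)
  refine ⟨k * (k * (A + B) + D), by finiteness, ?_⟩
  intro f hf hf1
  have a := hA' f hf hf1
  have b := hB' f hf hf1
  have d := hD' f hf hf1
  have mx : Measurable (fun z : E3 × E3 => pw (-2) (z.1 - z.2) * f z.2) :=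
    ((pw_measurable _).comp (measurable_fst.sub measurable_snd)).mul (hf.comp measurable_snd)
  have mA : Measurable (fun x => ∫⁻ y, pw (-2) (x - y) * f y) := mx.lintegral_prod_right'
  have my : Measurable (fun z : E3 × E3 =>
      (if 2 * ‖z.2‖ < ‖z.1‖ then pw (1 - n) z.2 * f z.2 else 0)) :=
    Measurable.ite (measurableSet_lt (by fun_prop) (by fun_prop))
      (((pw_measurable _).comp measurable_snd).mul (hf.comp measurable_snd)) measurable_const
  have mB : Measurable (fun x => pw (-2 - (1 - n)) x *
        ∫⁻ y, (if 2 * ‖y‖ < ‖x‖ then pw (1 - n) y * f y else 0)) :=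
    (pw_measurable _).mul my.lintegral_prod_right'
  have mAB : Measurable (fun x => k * ((∫⁻ y, pw (-2) (x - y) * f y) ^ q +
        (pw (-2 - (1 - n)) x *
        ∫⁻ y, (if 2 * ‖y‖ < ‖x‖ then pw (1 - n) y * f y else 0)) ^ q)) :=
    ((mA.pow_const q).add (mB.pow_const q)).const_mul k
  calc ∫⁻ x, Smaj n f x ^ q ≤ ∫⁻ x, k * (k * ((∫⁻ y, pw (-2) (x - y) * f y) ^ q +
        (pw (-2 - (1 - n)) x *
        ∫⁻ y, (if 2 * ‖y‖ < ‖x‖ then pw (1 - n) y * f y else 0)) ^ q) + (pw (-2 - (-n)) x *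
        ∫⁻ y, (if ‖x‖ ≤ 2 * ‖y‖ then pw (-n) y * f y else 0)) ^ q) := by
        refine lintegral_mono fun x => ?_
        unfold Smaj
        refine (ENNReal.rpow_add_le_mul_rpow_add_rpow _ _ hq1).trans ?_
        gcongr
        exact ENNReal.rpow_add_le_mul_rpow_add_rpow _ _ hq1
    _ = k * (k * ((∫⁻ x, (∫⁻ y, pw (-2) (x - y) * f y) ^ q) +
        (∫⁻ x, (pw (-2 - (1 - n)) x *
        ∫⁻ y, (if 2 * ‖y‖ < ‖x‖ then pw (1 - n) y * f y else 0)) ^ q)) + ∫⁻ x, (pw (-2 - (-n)) x *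
        ∫⁻ y, (if ‖x‖ ≤ 2 * ‖y‖ then pw (-n) y * f y else 0)) ^ q) := by
        rw [lintegral_const_mul' _ _ hkt, lintegral_add_left mAB, lintegral_const_mul' _ _ hkt,
          lintegral_add_left (mA.pow_const q)]
    _ ≤ _ := by gcongr

lemma Smaj_bdd (n p q p' : ℝ) (hpp : p.HolderConjugate p') (hpq : p < q)
    (hrel : 1 / q = 1 / p - 1 / 3) (hlo : (3 - n) / 3 < 1 / p) (hhi : 1 / p < (4 - n) / 3) :
    ∃ C : ℝ≥0∞, C ≠ ⊤ ∧ ∀ f : E3 → ℝ≥0∞, Measurable f →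
      (∫⁻ x, Smaj n f x ^ q) ^ (1 / q) ≤ C * (∫⁻ y, f y ^ p) ^ (1 / p) := by
  have hp0 : 0 < p := hpp.pos
  have hq0 : 0 < q := hp0.trans hpq
  obtain ⟨C, hC, hC'⟩ := Smaj_norm n p q p' hpp hpq hrel hlo hhi
  refine ⟨C ^ (1 / q) + 1, ENNReal.add_ne_top.2
    ⟨ENNReal.rpow_ne_top_of_nonneg (by positivity) hC, ENNReal.one_ne_top⟩, fun f hf => ?_⟩
  set N := ∫⁻ y, f y ^ p with hN
  by_cases h0 : N = 0
  · have : f =ᵐ[volume] 0 := by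
      have := (lintegral_eq_zero_iff (hf.pow_const p)).1 h0
      filter_upwards [this] with y hy
      simpa [hp0, hp0.not_gt] using hy
    simp [Smaj_zero n f this, hq0]
  by_cases ht : N = ⊤
  · rw [ht, ENNReal.top_rpow_of_pos (by positivity), ENNReal.mul_top (by simp)]
    exact le_top
  set d : ℝ≥0∞ := N ^ (1 / p) with hd
  have hd0 : d ≠ 0 := by
    rw [hd]; simp [ENNReal.rpow_eq_zero_iff, h0, ht]
  have hdt : d ≠ ⊤ := ENNReal.rpow_ne_top_of_nonneg (by positivity) ht
  have hdp : d ^ p = N := by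
    rw [hd, ← ENNReal.rpow_mul, one_div_mul_cancel hp0.ne', ENNReal.rpow_one]
  have hg := hC' (fun y => d⁻¹ * f y) (hf.const_mul _) (by
    calc ∫⁻ y, (d⁻¹ * f y) ^ p = ∫⁻ y, (d⁻¹) ^ p * f y ^ p := by
          refine lintegral_congr fun y => ENNReal.mul_rpow_of_nonneg _ _ hp0.le
      _ = (d⁻¹) ^ p * N := lintegral_const_mul _ (hf.pow_const p)
      _ = 1 := by rw [ENNReal.inv_rpow, hdp, ENNReal.inv_mul_cancel h0 ht]
      _ ≤ 1 := le_rfl)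
  calc (∫⁻ x, Smaj n f x ^ q) ^ (1 / q)
      = (∫⁻ x, d ^ q * Smaj n (fun y => d⁻¹ * f y) x ^ q) ^ (1 / q) := by
        congr 1
        refine lintegral_congr fun x => ?_
        rw [Smaj_smul n f _ (ENNReal.inv_ne_top.2 hd0), ← ENNReal.mul_rpow_of_nonneg _ _ hq0.le,
          ← mul_assoc, ENNReal.mul_inv_cancel hd0 hdt, one_mul]
    _ = (d ^ q * ∫⁻ x, Smaj n (fun y => d⁻¹ * f y) x ^ q) ^ (1 / q) := by
        rw [lintegral_const_mul' _ _ (ENNReal.rpow_ne_top_of_nonneg hq0.le hdt)]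
    _ ≤ (d ^ q * C) ^ (1 / q) := by gcongr
    _ = C ^ (1 / q) * d := by
        rw [ENNReal.mul_rpow_of_nonneg _ _ (by positivity), ← ENNReal.rpow_mul,
          mul_one_div_cancel hq0.ne', ENNReal.rpow_one, mul_comm]
    _ ≤ _ := by gcongr; exact le_self_add

/-- Weighted estimate for `Π` under the zero-mass condition:
for `n ∈ [1,3)`, `1/p₂ = 1/p₃ - 1/3`, `(3-n)/3 < 1/p₃ < (4-n)/3`, and Schwartz `a`
with `∫ a = 0`, one has `‖(1+|x|)^n Πa‖_{L^{p₂}} ≤ C ‖(1+|x|)^n a‖_{L^{p₃}}`. -/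
theorem PiOp_weighted_zero_mass (n p₂ p₃ : ℝ) (hn1 : 1 ≤ n) (hn3 : n < 3)
    (hp3 : 1 < p₃) (hp32 : p₃ < p₂) (hrel : 1 / p₂ = 1 / p₃ - 1 / 3)
    (hlo : (3 - n) / 3 < 1 / p₃) (hhi : 1 / p₃ < (4 - n) / 3) :
    ∃ C : ℝ, 0 < C ∧ ∀ a : 𝓢(EuclideanSpace ℝ (Fin 3), ℝ),
      (∫ x, a x) = 0 →
      eLpNorm (fun x => (1 + ‖x‖) ^ n * ‖PiOp (⇑a) x‖) (ENNReal.ofReal p₂) volume ≤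
        ENNReal.ofReal C *
          eLpNorm (fun x => (1 + ‖x‖) ^ n * a x) (ENNReal.ofReal p₃) volume := by

  have hp0 : 0 < p₃ := by linarith
  have hq0 : 0 < p₂ := by linarith
  have hpp := Real.HolderConjugate.conjExponent hp3
  obtain ⟨C, hC, hC'⟩ := Smaj_bdd n p₃ p₂ _ hpp hp32 hrel hlo hhi
  set M : ℝ≥0∞ := ENNReal.ofReal (46 * 2 ^ n) with hM
  have hMt : M ≠ ⊤ := ENNReal.ofReal_ne_top
  refine ⟨(M * C).toReal + 1, by positivity, fun a ha => ?_⟩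
  have hq' : (ENNReal.ofReal p₂) ≠ 0 := by simpa using hq0
  have hp' : (ENNReal.ofReal p₃) ≠ 0 := by simpa using hp0
  rw [eLpNorm_eq_lintegral_rpow_enorm_toReal hq' ENNReal.ofReal_ne_top,
    eLpNorm_eq_lintegral_rpow_enorm_toReal hp' ENNReal.ofReal_ne_top,
    ENNReal.toReal_ofReal hq0.le, ENNReal.toReal_ofReal hp0.le]
  set f : E3 → ℝ≥0∞ := fun y => ENNReal.ofReal ((1 + ‖y‖) ^ n * |a y|) with hf
  have mf : Measurable f := by
    simp only [hf]
    have : Measurable fun y => |a y| := a.continuous.measurable.abs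
    fun_prop
  have hfe : ∀ x : E3, ‖(1 + ‖x‖) ^ n * a x‖ₑ = f x := fun x => by
    rw [← ofReal_norm, norm_mul, Real.norm_eq_abs, Real.norm_eq_abs,
      abs_of_nonneg (show 0 ≤ (1 + ‖x‖) ^ n by positivity)]
  simp_rw [hfe]
  calc (∫⁻ x : E3, ‖(1 + ‖x‖) ^ n * ‖PiOp (⇑a) x‖‖ₑ ^ p₂) ^ (1 / p₂)
      ≤ (∫⁻ x : E3, M ^ p₂ * Smaj n f x ^ p₂) ^ (1 / p₂) := by
        refine ENNReal.rpow_le_rpow (lintegral_mono fun x => ?_) (by positivity)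
        simp only
        rw [← ENNReal.mul_rpow_of_nonneg _ _ hq0.le]
        refine ENNReal.rpow_le_rpow ?_ hq0.le
        rw [Real.enorm_of_nonneg (by positivity)]
        exact Smaj_pt n hn1 a a.continuous.measurable a.integrable ha x
    _ = M * (∫⁻ x : E3, Smaj n f x ^ p₂) ^ (1 / p₂) := by
        rw [lintegral_const_mul' _ _ (ENNReal.rpow_ne_top_of_nonneg hq0.le hMt),
          ENNReal.mul_rpow_of_nonneg _ _ (by positivity), ← ENNReal.rpow_mul,
          mul_one_div_cancel hq0.ne', ENNReal.rpow_one]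
    _ ≤ M * (C * (∫⁻ y, f y ^ p₃) ^ (1 / p₃)) := by gcongr; exact hC' f mf
    _ = (M * C) * (∫⁻ y, f y ^ p₃) ^ (1 / p₃) := by rw [mul_assoc]
    _ ≤ _ := by
        gcongr
        rw [ENNReal.ofReal_add ENNReal.toReal_nonneg zero_le_one,
          ENNReal.ofReal_toReal (ENNReal.mul_ne_top hMt hC)]
        exact le_self_add
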